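/- Let (μ₁(t)), (μ₂(t)), (σ₁(t)), (σ₂(t)) be real sequences with σ₁(t), σ₂(t) ≥ 0 and σ₁(t)² + σ₂(t)² > 0 for every t. Define s(t) = √(σ₁(t)² + σ₂(t)²), α(t) = (μ₁(t) − μ₂(t))/s(t), the Clark mean m(t) = μ₁(t)Φ(α(t)) + μ₂(t)Φ(−α(t)) + s(t)φ(α(t)), and the Clark variance v(t) = (μ₁(t)² + σ₁(t)²)Φ(α(t)) + (μ₂(t)² + σ₂(t)²)Φ(−α(t)) + (μ₁(t) + μ₂(t))s(t)φ(α(t)) − m(t)². If μ₁(t) → a, μ₂(t) → b, σ₁(t) → 0 and σ₂(t) → 0 as t → ∞, then m(t) → max(a, b) and v(t) → 0. -/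

import Mathlib

open MeasureTheory ProbabilityTheory Filter

/-- The cumulative distribution function of the standard Gaussian `N(0,1)`. -/
noncomputable def stdGaussianCDF (x : ℝ) : ℝ :=
  ((gaussianReal 0 1) (Set.Iic x)).toReal

/-- The probability density function of the standard Gaussian `N(0,1)`. -/
noncomputable def stdGaussianPDF (x : ℝ) : ℝ :=
  Real.exp (-x ^ 2 / 2) / Real.sqrt (2 * Real.pi)

/-- The Clark mean of two Gaussian moment pairs. -/
noncomputable def clarkMean (μ₁ μ₂ σ₁ σ₂ : ℝ) : ℝ :=
  μ₁ * stdGaussianCDF ((μ₁ - μ₂) / Real.sqrt (σ₁ ^ 2 + σ₂ ^ 2))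
    + μ₂ * stdGaussianCDF (-((μ₁ - μ₂) / Real.sqrt (σ₁ ^ 2 + σ₂ ^ 2)))
    + Real.sqrt (σ₁ ^ 2 + σ₂ ^ 2)
      * stdGaussianPDF ((μ₁ - μ₂) / Real.sqrt (σ₁ ^ 2 + σ₂ ^ 2))

/-- The Clark variance of two Gaussian moment pairs. -/
noncomputable def clarkVar (μ₁ μ₂ σ₁ σ₂ : ℝ) : ℝ :=
  (μ₁ ^ 2 + σ₁ ^ 2) * stdGaussianCDF ((μ₁ - μ₂) / Real.sqrt (σ₁ ^ 2 + σ₂ ^ 2))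
    + (μ₂ ^ 2 + σ₂ ^ 2) * stdGaussianCDF (-((μ₁ - μ₂) / Real.sqrt (σ₁ ^ 2 + σ₂ ^ 2)))
    + (μ₁ + μ₂) * Real.sqrt (σ₁ ^ 2 + σ₂ ^ 2)
      * stdGaussianPDF ((μ₁ - μ₂) / Real.sqrt (σ₁ ^ 2 + σ₂ ^ 2))
    - clarkMean μ₁ μ₂ σ₁ σ₂ ^ 2

/-! Since `μ₁ = μ₂ + s α`, Clark's formulas become `m = max μ₁ μ₂ + s (φ(α) - |α| Φ(-|α|))` and
`v = σ₁² Φ(α) + σ₂² Φ(-α) + s² k(α)` with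
`k(α) = α² Φ(α) Φ(-α) + α φ(α) (1 - 2 Φ(α)) - φ(α)²`. Chebyshev's inequality `α² Φ(-|α|) ≤ 1` and
the decay of `φ` bound both functions of `α` uniformly, so `|m - max μ₁ μ₂| ≤ s` and
`|v| ≤ 3 s²`. -/

lemma cdf_neg_of_isNegInvariant (ν : Measure ℝ) [IsProbabilityMeasure ν] [NullSingletonClass ν]
    [ν.IsNegInvariant] (x : ℝ) : cdf ν (-x) = 1 - cdf ν x := by
  have h_reflect : ν.real (Set.Iic (-x)) = ν.real (Set.Ici x) := by
    rw [← Set.neg_Ici, measureReal_def, Measure.measure_neg, measureReal_def]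
  rw [cdf_eq_real, cdf_eq_real, h_reflect, ← probReal_compl_eq_one_sub measurableSet_Iic,
    Set.compl_Iic, measureReal_congr Ioi_ae_eq_Ici]

lemma sq_mul_cdf_integral_sub_le_variance {ν : Measure ℝ} [IsProbabilityMeasure ν]
    (hν : MemLp id 2 ν) {x : ℝ} (hx : 0 ≤ x) :
    x ^ 2 * cdf ν (ν[id] - x) ≤ variance id ν := by
  rcases hx.eq_or_lt with rfl | hx
  · simp [variance_nonneg]
  have h_subset : Set.Iic (ν[id] - x) ⊆ {y | x ≤ |id y - ν[id]|} := fun y hy =>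
    (show x ≤ -(y - ν[id]) by linarith [Set.mem_Iic.mp hy]).trans (neg_le_abs _)
  have h_chebyshev : cdf ν (ν[id] - x) ≤ variance id ν / x ^ 2 := by
    rw [cdf_eq_real]
    exact ENNReal.toReal_le_of_le_ofReal (by positivity [variance_nonneg id ν])
      ((measure_mono h_subset).trans (meas_ge_le_variance_div_sq hν hx))
  rwa [le_div_iff₀' (by positivity)] at h_chebyshev

instance isNegInvariant_gaussianReal_zero (v : NNReal) :
    (gaussianReal 0 v).IsNegInvariant where
  neg_eq_self := gaussianReal_map_neg.trans (by rw [neg_zero])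

lemma stdGaussianCDF_eq_cdf (x : ℝ) : stdGaussianCDF x = cdf (gaussianReal 0 1) x :=
  (cdf_eq_real _ x).symm

lemma stdGaussianCDF_nonneg (x : ℝ) : 0 ≤ stdGaussianCDF x :=
  ENNReal.toReal_nonneg

lemma stdGaussianCDF_le_one (x : ℝ) : stdGaussianCDF x ≤ 1 :=
  stdGaussianCDF_eq_cdf x ▸ cdf_le_one _ x

lemma stdGaussianCDF_neg (x : ℝ) : stdGaussianCDF (-x) = 1 - stdGaussianCDF x := by
  have := nullSingletonClass_gaussianReal (μ := 0) one_ne_zero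
  simp only [stdGaussianCDF_eq_cdf, cdf_neg_of_isNegInvariant]

lemma sq_mul_stdGaussianCDF_neg_abs_le_one (x : ℝ) : x ^ 2 * stdGaussianCDF (-|x|) ≤ 1 := by
  simpa [stdGaussianCDF_eq_cdf] using
    sq_mul_cdf_integral_sub_le_variance (memLp_id_gaussianReal (μ := 0) (v := 1) 2) (abs_nonneg x)

lemma abs_mul_stdGaussianCDF_neg_abs_le_one (x : ℝ) : |x| * stdGaussianCDF (-|x|) ≤ 1 := by
  have hΦ := stdGaussianCDF_nonneg (-|x|)
  refine (sq_le_one_iff₀ (by positivity)).mp ?_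
  calc (|x| * stdGaussianCDF (-|x|)) ^ 2
      = x ^ 2 * stdGaussianCDF (-|x|) * stdGaussianCDF (-|x|) := by rw [mul_pow, sq_abs]; ring
    _ ≤ 1 := mul_le_one₀ (sq_mul_stdGaussianCDF_neg_abs_le_one x) hΦ (stdGaussianCDF_le_one _)

lemma sq_mul_stdGaussianCDF_mul_stdGaussianCDF_neg_le_one (x : ℝ) :
    x ^ 2 * (stdGaussianCDF x * stdGaussianCDF (-x)) ≤ 1 := by
  have h_symm : stdGaussianCDF x * stdGaussianCDF (-x)
      = stdGaussianCDF |x| * stdGaussianCDF (-|x|) := by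
    rcases abs_choice x with h | h <;> rw [h]
    rw [neg_neg, mul_comm]
  calc x ^ 2 * (stdGaussianCDF x * stdGaussianCDF (-x))
      = stdGaussianCDF |x| * (x ^ 2 * stdGaussianCDF (-|x|)) := by rw [h_symm]; ring
    _ ≤ 1 := mul_le_one₀ (stdGaussianCDF_le_one _)
        (mul_nonneg (sq_nonneg x) (stdGaussianCDF_nonneg _))
        (sq_mul_stdGaussianCDF_neg_abs_le_one x)

lemma mul_stdGaussianCDF_eq_max_sub (x : ℝ) :
    x * stdGaussianCDF x = max x 0 - |x| * stdGaussianCDF (-|x|) := by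
  rcases le_total 0 x with hx | hx
  · rw [max_eq_left hx, abs_of_nonneg hx, stdGaussianCDF_neg]
    ring
  · rw [max_eq_right hx, abs_of_nonpos hx, neg_neg]
    ring

lemma stdGaussianPDF_nonneg (x : ℝ) : 0 ≤ stdGaussianPDF x := by
  unfold stdGaussianPDF
  positivity

lemma stdGaussianPDF_le_exp (x : ℝ) : stdGaussianPDF x ≤ Real.exp (-x ^ 2 / 2) :=
  div_le_self (Real.exp_nonneg _) (Real.one_le_sqrt.mpr (by linarith [Real.pi_gt_three]))

lemma stdGaussianPDF_le_one (x : ℝ) : stdGaussianPDF x ≤ 1 :=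
  (stdGaussianPDF_le_exp x).trans (Real.exp_le_one_iff.mpr (by linarith [sq_nonneg x]))

lemma abs_mul_stdGaussianPDF_le_one (x : ℝ) : |x| * stdGaussianPDF x ≤ 1 := by
  have h_abs_le : |x| ≤ Real.exp (x ^ 2 / 2) := by
    nlinarith [Real.add_one_le_exp (x ^ 2 / 2), sq_nonneg (|x| - 1), sq_abs x]
  calc |x| * stdGaussianPDF x
      ≤ Real.exp (x ^ 2 / 2) * Real.exp (-x ^ 2 / 2) :=
        mul_le_mul h_abs_le (stdGaussianPDF_le_exp x) (stdGaussianPDF_nonneg x)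
          (Real.exp_nonneg _)
    _ = 1 := by rw [← Real.exp_add, neg_div, add_neg_cancel, Real.exp_zero]

/-- The standard deviation of `X₁ - X₂` for independent `X₁`, `X₂` with standard deviations `σ₁`,
`σ₂`: the quantity `s` of Clark's formulas. -/
noncomputable def clarkScale (σ₁ σ₂ : ℝ) : ℝ :=
  √(σ₁ ^ 2 + σ₂ ^ 2)

/-- The standardized mean difference, the quantity `α` of Clark's formulas. It takes the junk value
`0` when `σ₁ = σ₂ = 0`. -/
noncomputable def clarkRatio (μ₁ μ₂ σ₁ σ₂ : ℝ) : ℝ :=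
  (μ₁ - μ₂) / clarkScale σ₁ σ₂

/-- The quantity `𝔼[max (Z + α) 0] - max α 0` for a standard Gaussian `Z`: the distance from the
Clark mean to the larger of the two means, in units of `clarkScale`. -/
noncomputable def clarkMeanExcess (α : ℝ) : ℝ :=
  stdGaussianPDF α - |α| * stdGaussianCDF (-|α|)

/-- The quantity `Var[max (Z + α) 0] - Φ(α)` for a standard Gaussian `Z`: the difference between
the Clark variance and the mixture `σ₁² Φ(α) + σ₂² Φ(-α)`, in units of `clarkScale ^ 2`. -/
noncomputable def clarkVarExcess (α : ℝ) : ℝ :=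
  α ^ 2 * (stdGaussianCDF α * stdGaussianCDF (-α))
    + α * stdGaussianPDF α * (1 - 2 * stdGaussianCDF α) - stdGaussianPDF α ^ 2

lemma abs_clarkMeanExcess_le_one (α : ℝ) : |clarkMeanExcess α| ≤ 1 :=
  abs_sub_le_of_nonneg_of_le (stdGaussianPDF_nonneg α) (stdGaussianPDF_le_one α)
    (mul_nonneg (abs_nonneg α) (stdGaussianCDF_nonneg _)) (abs_mul_stdGaussianCDF_neg_abs_le_one α)

lemma abs_clarkVarExcess_le_two (α : ℝ) : |clarkVarExcess α| ≤ 2 := by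
  have hφ := stdGaussianPDF_nonneg α
  have hΦ := stdGaussianCDF_nonneg α
  have h_squares :
      |α ^ 2 * (stdGaussianCDF α * stdGaussianCDF (-α)) - stdGaussianPDF α ^ 2| ≤ 1 :=
    abs_sub_le_of_nonneg_of_le
      (mul_nonneg (sq_nonneg α) (mul_nonneg hΦ (stdGaussianCDF_nonneg (-α))))
      (sq_mul_stdGaussianCDF_mul_stdGaussianCDF_neg_le_one α)
      (sq_nonneg _) (pow_le_one₀ hφ (stdGaussianPDF_le_one α))
  have h_cross : |α * stdGaussianPDF α * (1 - 2 * stdGaussianCDF α)| ≤ 1 := by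
    rw [abs_mul, abs_mul, abs_of_nonneg hφ]
    refine mul_le_one₀ (abs_mul_stdGaussianPDF_le_one α) (abs_nonneg _) (abs_le.mpr ⟨?_, ?_⟩) <;>
      linarith [stdGaussianCDF_le_one α]
  calc |clarkVarExcess α|
      = |(α ^ 2 * (stdGaussianCDF α * stdGaussianCDF (-α)) - stdGaussianPDF α ^ 2)
          + α * stdGaussianPDF α * (1 - 2 * stdGaussianCDF α)| := by
        rw [clarkVarExcess, add_sub_right_comm]
    _ ≤ 2 := (abs_add_le _ _).trans (by linarith)

section

variable {μ₁ μ₂ σ₁ σ₂ : ℝ}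

lemma clarkScale_nonneg : 0 ≤ clarkScale σ₁ σ₂ :=
  Real.sqrt_nonneg _

lemma sq_clarkScale : clarkScale σ₁ σ₂ ^ 2 = σ₁ ^ 2 + σ₂ ^ 2 :=
  Real.sq_sqrt (by positivity)

lemma clarkScale_mul_clarkRatio (hσ : 0 < σ₁ ^ 2 + σ₂ ^ 2) :
    clarkScale σ₁ σ₂ * clarkRatio μ₁ μ₂ σ₁ σ₂ = μ₁ - μ₂ :=
  mul_div_cancel₀ _ (Real.sqrt_pos.mpr hσ).ne'

lemma clarkMean_eq_clarkRatio : clarkMean μ₁ μ₂ σ₁ σ₂ =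
    μ₁ * stdGaussianCDF (clarkRatio μ₁ μ₂ σ₁ σ₂) + μ₂ * stdGaussianCDF (-clarkRatio μ₁ μ₂ σ₁ σ₂)
      + clarkScale σ₁ σ₂ * stdGaussianPDF (clarkRatio μ₁ μ₂ σ₁ σ₂) :=
  rfl

lemma clarkVar_eq_clarkRatio : clarkVar μ₁ μ₂ σ₁ σ₂ =
    (μ₁ ^ 2 + σ₁ ^ 2) * stdGaussianCDF (clarkRatio μ₁ μ₂ σ₁ σ₂)
      + (μ₂ ^ 2 + σ₂ ^ 2) * stdGaussianCDF (-clarkRatio μ₁ μ₂ σ₁ σ₂)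
      + (μ₁ + μ₂) * clarkScale σ₁ σ₂ * stdGaussianPDF (clarkRatio μ₁ μ₂ σ₁ σ₂)
      - clarkMean μ₁ μ₂ σ₁ σ₂ ^ 2 :=
  rfl

lemma clarkMean_eq_max_add (hσ : 0 < σ₁ ^ 2 + σ₂ ^ 2) :
    clarkMean μ₁ μ₂ σ₁ σ₂ =
      max μ₁ μ₂ + clarkScale σ₁ σ₂ * clarkMeanExcess (clarkRatio μ₁ μ₂ σ₁ σ₂) := by
  have h_diff := clarkScale_mul_clarkRatio (μ₁ := μ₁) (μ₂ := μ₂) hσ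
  rw [clarkMean_eq_clarkRatio, clarkMeanExcess]
  set s := clarkScale σ₁ σ₂
  set α := clarkRatio μ₁ μ₂ σ₁ σ₂
  have h_max : max μ₁ μ₂ = μ₂ + s * max α 0 := by
    rw [mul_max_of_nonneg _ _ clarkScale_nonneg, h_diff, mul_zero, ← max_add_add_left,
      add_sub_cancel, add_zero]
  rw [h_max, stdGaussianCDF_neg α]
  linear_combination s * mul_stdGaussianCDF_eq_max_sub α - stdGaussianCDF α * h_diff

lemma clarkVar_eq_mixture_add (hσ : 0 < σ₁ ^ 2 + σ₂ ^ 2) :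
    clarkVar μ₁ μ₂ σ₁ σ₂ =
      σ₁ ^ 2 * stdGaussianCDF (clarkRatio μ₁ μ₂ σ₁ σ₂)
        + σ₂ ^ 2 * stdGaussianCDF (-clarkRatio μ₁ μ₂ σ₁ σ₂)
        + clarkScale σ₁ σ₂ ^ 2 * clarkVarExcess (clarkRatio μ₁ μ₂ σ₁ σ₂) := by
  have h_diff := clarkScale_mul_clarkRatio (μ₁ := μ₁) (μ₂ := μ₂) hσ
  rw [clarkVar_eq_clarkRatio, clarkMean_eq_clarkRatio, clarkVarExcess, stdGaussianCDF_neg]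
  generalize clarkRatio μ₁ μ₂ σ₁ σ₂ = α at h_diff ⊢
  generalize clarkScale σ₁ σ₂ = s at h_diff ⊢
  obtain rfl : μ₁ = μ₂ + s * α := by linarith
  ring

lemma abs_clarkMean_sub_max_le (hσ : 0 < σ₁ ^ 2 + σ₂ ^ 2) :
    |clarkMean μ₁ μ₂ σ₁ σ₂ - max μ₁ μ₂| ≤ clarkScale σ₁ σ₂ := by
  rw [clarkMean_eq_max_add hσ, add_sub_cancel_left, abs_mul, abs_of_nonneg clarkScale_nonneg]
  exact mul_le_of_le_one_right clarkScale_nonneg (abs_clarkMeanExcess_le_one _)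

lemma abs_clarkVar_le (hσ : 0 < σ₁ ^ 2 + σ₂ ^ 2) :
    |clarkVar μ₁ μ₂ σ₁ σ₂| ≤ 3 * clarkScale σ₁ σ₂ ^ 2 := by
  rw [clarkVar_eq_mixture_add hσ]
  set s := clarkScale σ₁ σ₂
  set α := clarkRatio μ₁ μ₂ σ₁ σ₂
  have hΦ := stdGaussianCDF_nonneg α
  have hΦ_neg := stdGaussianCDF_nonneg (-α)
  have h_mixture : |σ₁ ^ 2 * stdGaussianCDF α + σ₂ ^ 2 * stdGaussianCDF (-α)| ≤ s ^ 2 := by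
    rw [abs_of_nonneg (by positivity), sq_clarkScale]
    exact add_le_add (mul_le_of_le_one_right (sq_nonneg _) (stdGaussianCDF_le_one _))
      (mul_le_of_le_one_right (sq_nonneg _) (stdGaussianCDF_le_one _))
  have h_excess : |s ^ 2 * clarkVarExcess α| ≤ s ^ 2 * 2 := by
    rw [abs_mul, abs_of_nonneg (sq_nonneg s)]
    exact mul_le_mul_of_nonneg_left (abs_clarkVarExcess_le_two α) (sq_nonneg s)
  exact (abs_add_le _ _).trans (by linarith)

end

section

variable {ι : Type*} {l : Filter ι} {μ₁ μ₂ σ₁ σ₂ : ι → ℝ}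

lemma tendsto_clarkScale_zero (hσ₁ : Tendsto σ₁ l (nhds 0)) (hσ₂ : Tendsto σ₂ l (nhds 0)) :
    Tendsto (fun t => clarkScale (σ₁ t) (σ₂ t)) l (nhds 0) := by
  simpa [clarkScale] using ((hσ₁.pow 2).add (hσ₂.pow 2)).sqrt

theorem stmt9_general (hpos : ∀ᶠ t in l, 0 < σ₁ t ^ 2 + σ₂ t ^ 2)
    (hσ₁ : Tendsto σ₁ l (nhds 0)) (hσ₂ : Tendsto σ₂ l (nhds 0)) :
    Tendsto (fun t => clarkMean (μ₁ t) (μ₂ t) (σ₁ t) (σ₂ t) - max (μ₁ t) (μ₂ t)) l (nhds 0) ∧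
    Tendsto (fun t => clarkVar (μ₁ t) (μ₂ t) (σ₁ t) (σ₂ t)) l (nhds 0) := by
  have h_scale := tendsto_clarkScale_zero hσ₁ hσ₂
  have h_three_sq : Tendsto (fun t => 3 * clarkScale (σ₁ t) (σ₂ t) ^ 2) l (nhds 0) := by
    simpa using (h_scale.pow 2).const_mul 3
  exact ⟨squeeze_zero_norm' (hpos.mono fun _ => abs_clarkMean_sub_max_le) h_scale,
    squeeze_zero_norm' (hpos.mono fun _ => abs_clarkVar_le) h_three_sq⟩

end

/-- If `μ₁(t) → a`, `μ₂(t) → b` and `σ₁(t), σ₂(t) → 0` (with `σ₁(t)² + σ₂(t)² > 0` for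
every `t`), then the Clark mean converges to `max a b` and the Clark variance to `0`. -/
theorem stmt9
    (μ₁ μ₂ σ₁ σ₂ : ℕ → ℝ) (a b : ℝ)
    (hσ₁nonneg : ∀ t, 0 ≤ σ₁ t) (hσ₂nonneg : ∀ t, 0 ≤ σ₂ t)
    (hpos : ∀ t, 0 < σ₁ t ^ 2 + σ₂ t ^ 2)
    (hμ₁ : Tendsto μ₁ atTop (nhds a)) (hμ₂ : Tendsto μ₂ atTop (nhds b))
    (hσ₁ : Tendsto σ₁ atTop (nhds 0)) (hσ₂ : Tendsto σ₂ atTop (nhds 0)) :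
    Tendsto (fun t => clarkMean (μ₁ t) (μ₂ t) (σ₁ t) (σ₂ t)) atTop (nhds (max a b)) ∧
    Tendsto (fun t => clarkVar (μ₁ t) (μ₂ t) (σ₁ t) (σ₂ t)) atTop (nhds 0) := by
  have h := stmt9_general (μ₁ := μ₁) (μ₂ := μ₂) (.of_forall hpos) hσ₁ hσ₂
  exact ⟨by simpa using h.1.add (hμ₁.max hμ₂), h.2⟩
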